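/- arXiv:2305.01301 — 2 statements merged into one kernel-verified Lean document; each statement's English description precedes it below -/
import Mathlib

section
/- Let n ≥ 1 and let S be any F₂-linear subspace of ((F₂)²)ⁿ, with symplectic dual S^⊥ₛ. Then for all real numbers x and z: Σ_{v ∈ S^⊥ₛ} x^{n−wt(v)} · z^{wt(v)} = (1/|S|) · Σ_{v ∈ S} (x + 3z)^{n−wt(v)} · (x − z)^{wt(v)}. -/
/-- Symplectic representation of a Pauli error pattern on `n` qubits. -/
abbrev PauliVec (n : ℕ) : Type := Fin n → ZMod 2 × ZMod 2

/-- The weight of a Pauli vector: the number of non-identity components. -/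
def wt {n : ℕ} (v : PauliVec n) : ℕ := (Finset.univ.filter fun i => v i ≠ 0).card

/-- The symplectic inner product over `F₂`. -/
def symp {n : ℕ} (u v : PauliVec n) : ZMod 2 :=
  ∑ i, ((u i).1 * (v i).2 + (u i).2 * (v i).1)

/-- The symplectic dual of a subspace `S`. -/
def sympDual {n : ℕ} (S : Submodule (ZMod 2) (PauliVec n)) : Set (PauliVec n) :=
  {v | ∀ s ∈ S, symp v s = 0}

/-!
The commutation sign `(-1) ^ ⟨v, s⟩` is a character in each variable. Summed over `s ∈ S` it gives
`|S|` if `v` lies in the symplectic dual and `0` otherwise, so `|S|` times the enumerator of the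
dual is the sum over `S` of the Fourier transform of `v ↦ x ^ (n - wt v) * z ^ wt v`. Both the sign
and this weight function are products over the qubits, so the transform is too; its factor at a
qubit is `x + 3 * z` where `s` acts as the identity, and `x - z` elsewhere.
-/

section Characters

theorem addChar_map_sum {ι A M : Type*} [AddCommMonoid A] [CommMonoid M] (χ : AddChar A M)
    (s : Finset ι) (a : ι → A) : χ (∑ i ∈ s, a i) = ∏ i ∈ s, χ (a i) :=
  map_sum χ.toAddMonoidHom a s

variable {G D : Type*} [AddGroup G] [CommSemiring D] [IsDomain D]

theorem sum_sum_addChar_smul {α M : Type*} [Fintype G] [Fintype α] [AddCommMonoid M] [Module D M]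
    (χ : α → AddChar G D) (f : α → M) :
    ∑ g, ∑ v, χ v g • f v = Fintype.card G • ∑ v with χ v = 0, f v := by
  rw [Finset.sum_comm]
  simp only [← Finset.sum_smul, AddChar.sum_eq_ite, ite_smul, zero_smul, Nat.cast_smul_eq_nsmul]
  rw [← Finset.sum_filter, Finset.smul_sum]

theorem sum_addChar_smul_ite {M : Type*} [Fintype G] [DecidableEq G] [AddCommGroup M] [Module D M]
    (χ : AddChar G D) (x z : M) :
    ∑ g, χ g • (if g = 0 then x else z) =
      if χ = 0 then x + ((Fintype.card G : ℤ) - 1) • z else x - z := by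
  have smul_ite_eq (g : G) : χ g • (if g = 0 then x else z) =
      χ g • z + if g = 0 then x - z else 0 := by
    split_ifs with hg <;> simp [hg]
  calc
    ∑ g, χ g • (if g = 0 then x else z) = (∑ g, χ g) • z + (x - z) := by
      simp only [smul_ite_eq, Finset.sum_add_distrib, Finset.sum_smul, Fintype.sum_ite_eq']
    _ = if χ = 0 then x + ((Fintype.card G : ℤ) - 1) • z else x - z := by
      rw [AddChar.sum_eq_ite]
      split_ifs
      · rw [Nat.cast_smul_eq_nsmul, sub_smul, natCast_zsmul, one_smul]
        abel
      · rw [zero_smul, zero_add]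

end Characters

section HammingWeight

variable {ι G : Type*} [Fintype ι] [DecidableEq G]

theorem prod_ite_eq_pow_hammingNorm {M : Type*} [Zero G] [CommMonoid M] (v : ι → G) (x z : M) :
    ∏ i, (if v i = 0 then x else z) =
      x ^ (Fintype.card ι - hammingNorm v) * z ^ hammingNorm v := by
  have card_zeros :
      (Finset.univ.filter fun i => v i = 0).card = Fintype.card ι - hammingNorm v :=
    Nat.eq_sub_of_add_eq <|
      Finset.card_filter_add_card_filter_not (s := Finset.univ) fun i => v i = 0
  rw [Finset.prod_ite, Finset.prod_const, Finset.prod_const, card_zeros]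
  rfl

theorem sum_prod_addChar_smul_hammingWeight {D R : Type*} [DecidableEq ι] [AddGroup G]
    [Fintype G] [CommSemiring D] [IsDomain D] [CommRing R] [Algebra D R]
    (χ : ι → AddChar G D) (x z : R) :
    ∑ v : ι → G, (∏ i, χ i (v i)) •
        (x ^ (Fintype.card ι - hammingNorm v) * z ^ hammingNorm v) =
      (x + ((Fintype.card G : ℤ) - 1) • z) ^ (Fintype.card ι - hammingNorm χ) *
        (x - z) ^ hammingNorm χ := by
  calc
    _ = ∑ v : ι → G, ∏ i, χ i (v i) • (if v i = 0 then x else z) := by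
      simp only [← prod_ite_eq_pow_hammingNorm, Finset.prod_smul]
    _ = ∏ i, ∑ a, χ i a • (if a = 0 then x else z) := by
      rw [Finset.prod_univ_sum, Fintype.piFinset_univ]
    _ = _ := by
      simp only [sum_addChar_smul_ite, prod_ite_eq_pow_hammingNorm]

end HammingWeight

/-- The sign character `a ↦ (-1) ^ a` of `F₂`. It is integer-valued so that it can act on any
commutative ring of weights. -/
def signChar : AddChar (ZMod 2) ℤ :=
  AddChar.zmodChar 2 (ζ := -1) (by norm_num)

theorem signChar_injective : Function.Injective signChar := by
  decide

/-- The commutation character of a single-qubit Pauli operator `b`: its value at `a` is `1` if the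
Pauli operators `a` and `b` commute, and `-1` if they anticommute. -/
def pauliChar (b : ZMod 2 × ZMod 2) : AddChar (ZMod 2 × ZMod 2) ℤ :=
  signChar.compAddMonoidHom <|
    AddMonoidHom.mk' (fun a => a.1 * b.2 + a.2 * b.1) fun _ _ => by
      simp only [Prod.fst_add, Prod.snd_add]
      ring

theorem pauliChar_zero : pauliChar 0 = 0 := by
  ext a
  simp [pauliChar]

theorem pauliChar_injective : Function.Injective pauliChar := by
  intro b c h
  have eval_eq (a : ZMod 2 × ZMod 2) : a.1 * b.2 + a.2 * b.1 = a.1 * c.2 + a.2 * c.1 :=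
    signChar_injective (DFunLike.congr_fun h a)
  exact Prod.ext (by simpa using eval_eq (0, 1)) (by simpa using eval_eq (1, 0))

section Symplectic

variable {n : ℕ}

/-- The commutation character of an `n`-qubit Pauli error pattern `v`, namely
`u ↦ (-1) ^ ⟨v, u⟩`. -/
def sympChar (v : PauliVec n) : AddChar (PauliVec n) ℤ :=
  signChar.compAddMonoidHom <|
    AddMonoidHom.mk' (symp v) fun _ _ => by
      simp only [symp, Pi.add_apply, Prod.fst_add, Prod.snd_add, ← Finset.sum_add_distrib]
      exact Finset.sum_congr rfl fun _ _ => by ring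

theorem sympChar_apply_eq_prod (v u : PauliVec n) :
    sympChar v u = ∏ i, pauliChar (u i) (v i) :=
  addChar_map_sum signChar Finset.univ _

theorem mem_sympDual_iff_sympChar_comp_eq_zero (S : Submodule (ZMod 2) (PauliVec n))
    (v : PauliVec n) :
    v ∈ sympDual S ↔ (sympChar v).compAddMonoidHom S.subtype.toAddMonoidHom = 0 := by
  simp only [AddChar.eq_zero_iff, Subtype.forall]
  exact forall₂_congr fun _ _ => (signChar_injective.eq_iff' signChar.map_zero_eq_one).symm

theorem sum_sympChar_smul_weight {R : Type*} [CommRing R] (u : PauliVec n) (x z : R) :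
    ∑ v, sympChar v u • (x ^ (n - wt v) * z ^ wt v) =
      (x + 3 * z) ^ (n - wt u) * (x - z) ^ wt u := by
  have hammingNorm_pauliChar : hammingNorm (fun i => pauliChar (u i)) = wt u :=
    hammingNorm_comp (fun _ => pauliChar) (fun _ => pauliChar_injective) fun _ => pauliChar_zero
  have transform := sum_prod_addChar_smul_hammingWeight (fun i => pauliChar (u i)) x z
  simp only [hammingNorm_pauliChar, ← sympChar_apply_eq_prod] at transform
  have card_pauli : (Fintype.card (ZMod 2 × ZMod 2) : ℤ) - 1 = 3 := by decide
  rw [card_pauli, Fintype.card_fin, ofNat_zsmul, nsmul_eq_mul] at transform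
  exact transform

end Symplectic

open scoped Classical in
theorem stmt_1_general {R : Type*} [CommRing R] (n : ℕ) (S : Submodule (ZMod 2) (PauliVec n))
    (x z : R) :
    (Nat.card S : R) * ∑ v ∈ (sympDual S).toFinset, x ^ (n - wt v) * z ^ (wt v)
      = ∑ v ∈ (S : Set (PauliVec n)).toFinset, (x + 3 * z) ^ (n - wt v) * (x - z) ^ (wt v) := by
  let χ (v : PauliVec n) : AddChar S ℤ :=
    (sympChar v).compAddMonoidHom S.subtype.toAddMonoidHom
  have dual_eq : (sympDual S).toFinset = Finset.univ.filter fun v => χ v = 0 := by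
    ext v
    simp [χ, mem_sympDual_iff_sympChar_comp_eq_zero]
  calc
    _ = ∑ s : S, ∑ v, χ v s • (x ^ (n - wt v) * z ^ wt v) := by
      rw [sum_sum_addChar_smul, dual_eq, nsmul_eq_mul, Nat.card_eq_fintype_card]
    _ = ∑ s : S, (x + 3 * z) ^ (n - wt (s : PauliVec n)) * (x - z) ^ wt (s : PauliVec n) :=
      Fintype.sum_congr _ _ fun s => sum_sympChar_smul_weight s.1 x z
    _ = _ := .symm <|
      Finset.sum_subtype _ (fun _ => Set.mem_toFinset) _

open scoped Classical in
/-- Quantum MacWilliams identity: the weight enumerator of the symplectic dual `S^⊥ₛ`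
is obtained from the weight enumerator of `S` by the MacWilliams transform. -/
theorem stmt_1 (n : ℕ) (hn : 1 ≤ n) (S : Submodule (ZMod 2) (PauliVec n)) (x z : ℝ) :
    ∑ v ∈ (sympDual S).toFinset, x ^ (n - wt v) * z ^ (wt v)
      = (1 / (Nat.card S : ℝ)) *
          ∑ v ∈ (S : Set (PauliVec n)).toFinset,
            (x + 3 * z) ^ (n - wt v) * (x - z) ^ (wt v) := by
  rw [← stmt_1_general, one_div, inv_mul_cancel_left₀]
  exact_mod_cast Nat.card_pos.ne'
end

section
/- Let n = 5 and let g₁, g₂, g₃, g₄ ∈ ((F₂)²)⁵ be the symplectic representations of the generators of the [[5,1,3]] code: g₁ = X₁Z₂Z₃X₄ (x-support {1,4}, z-support {2,3}), g₂ = X₂Z₃Z₄X₅ (x-support {2,5}, z-support {3,4}), g₃ = X₁X₃Z₄Z₅ (x-support {1,3}, z-support {4,5}), g₄ = Z₁X₂X₄Z₅ (x-support {2,4}, z-support {1,5}). Then the syndrome map v ↦ (⟨v,g₁⟩, ⟨v,g₂⟩, ⟨v,g₃⟩, ⟨v,g₄⟩) ∈ (F₂)⁴, restricted to the 16 vectors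 v ∈ ((F₂)²)⁵ of weight wt(v) ≤ 1, is a bijection onto (F₂)⁴. -/
/-- `g₁ = X₁Z₂Z₃X₄` for the `[[5,1,3]]` code. -/
def g1 : PauliVec 5 := ![(1,0),(0,1),(0,1),(1,0),(0,0)]
/-- `g₂ = X₂Z₃Z₄X₅`. -/
def g2 : PauliVec 5 := ![(0,0),(1,0),(0,1),(0,1),(1,0)]
/-- `g₃ = X₁X₃Z₄Z₅`. -/
def g3 : PauliVec 5 := ![(1,0),(0,0),(1,0),(0,1),(0,1)]
/-- `g₄ = Z₁X₂X₄Z₅`. -/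
def g4 : PauliVec 5 := ![(0,1),(1,0),(0,0),(1,0),(0,1)]

/-!
A group homomorphism whose nonzero kernel elements all have weight at least `2t + 1` separates the
vectors of weight at most `t`, since the difference of two of them has weight at most `2t`. If the
target is no larger than the ball of radius `t`, that is, if the Hamming bound is attained, counting
makes it a bijection there.

For the `[[5,1,3]]` code the single-qubit errors on two different qubits have independent syndromes,
so `t = 1` is allowed, and `1 + 5 * 3 = 2 ^ 4`.
-/

open Finset

section HammingBall

variable {ι M A : Type*} [Fintype ι] [DecidableEq M]

theorem exists_eq_single_add_single_of_hammingNorm_le_two [DecidableEq ι] [Nontrivial ι]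
    [AddZeroClass M] {v : ι → M} (hv : hammingNorm v ≤ 2) :
    ∃ i j, i ≠ j ∧ v = Pi.single i (v i) + Pi.single j (v j) := by
  obtain ⟨s, hsupp, hs⟩ := exists_superset_card_eq hv Fintype.one_lt_card
  obtain ⟨i, j, hij, rfl⟩ := card_eq_two.mp hs
  refine ⟨i, j, hij, funext fun k => ?_⟩
  by_cases hk : k ∈ ({i, j} : Finset ι)
  · obtain rfl | rfl := by simpa only [mem_insert, mem_singleton] using hk
    · simp [hij]
    · simp [hij.symm]
  · have hvk : v k = 0 := by
      by_contra hne
      exact hk (hsupp (mem_filter.mpr ⟨mem_univ k, hne⟩))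
    rw [mem_insert, mem_singleton, not_or] at hk
    simp [hvk, hk.1, hk.2]

theorem injOn_hammingNorm_le_of_ker [AddGroup M] [AddZeroClass A] (f : (ι → M) →+ A) {t : ℕ}
    (hker : ∀ v, f v = 0 → hammingNorm v ≤ 2 * t → v = 0) :
    Set.InjOn f {v | hammingNorm v ≤ t} := by
  intro u (hu : hammingNorm u ≤ t) v (hv : hammingNorm v ≤ t) huv
  have hnorm : hammingNorm (-u + v) ≤ 2 * t := calc
    hammingNorm (-u + v) = hammingDist u v := (hammingDist_eq_hammingNorm u v).symm
    _ ≤ hammingNorm u + hammingNorm v := by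
      simpa only [hammingDist_zero_left] using hammingDist_triangle_left u v 0
    _ ≤ 2 * t := by lia
  have hmap : f (-u + v) = 0 := by
    rw [map_add, ← huv, ← map_add, neg_add_cancel, map_zero]
  exact neg_add_eq_zero.mp (hker _ hmap hnorm)

variable [Fintype M]

theorem card_filter_support_eq [DecidableEq ι] [Zero M] (s : Finset ι) :
    #{v : ι → M | ({i | v i ≠ 0} : Finset ι) = s} = (Fintype.card M - 1) ^ #s := by
  have hpi : ({v : ι → M | ({i | v i ≠ 0} : Finset ι) = s} : Finset (ι → M)) =
      Fintype.piFinset fun i => if i ∈ s then {0}ᶜ else {0} := by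
    ext v
    simp only [mem_filter_univ, Finset.ext_iff, Fintype.mem_piFinset]
    refine forall_congr' fun i => ?_
    by_cases hi : i ∈ s <;> simp [hi]
  rw [hpi, Fintype.card_piFinset]
  simp [apply_ite card, card_compl]

theorem card_filter_hammingNorm_eq [DecidableEq ι] [Zero M] (w : ℕ) :
    #{v : ι → M | hammingNorm v = w} =
      (Fintype.card ι).choose w * (Fintype.card M - 1) ^ w := by
  rw [card_eq_sum_card_fiberwise (f := fun v : ι → M => ({i | v i ≠ 0} : Finset ι))
    (t := powersetCard w univ) fun v hv => by simpa [hammingNorm] using hv]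
  have hfiber : ∀ s ∈ powersetCard w (univ : Finset ι),
      #{v ∈ ({v : ι → M | hammingNorm v = w} : Finset (ι → M)) |
        ({i | v i ≠ 0} : Finset ι) = s} = (Fintype.card M - 1) ^ w := by
    intro s hs
    obtain ⟨-, rfl⟩ := mem_powersetCard.mp hs
    rw [← card_filter_support_eq s, filter_filter]
    congr 1
    exact filter_congr fun v _ => and_iff_right_of_imp (congrArg card)
  rw [sum_congr rfl hfiber, sum_const, card_powersetCard, card_univ, smul_eq_mul]

theorem card_filter_hammingNorm_le [DecidableEq ι] [Zero M] (t : ℕ) :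
    #{v : ι → M | hammingNorm v ≤ t} =
      ∑ w ∈ range (t + 1), (Fintype.card ι).choose w * (Fintype.card M - 1) ^ w := by
  rw [card_eq_sum_card_fiberwise (f := hammingNorm) (t := range (t + 1))
    fun v hv => by simpa [Nat.lt_succ_iff] using hv]
  refine sum_congr rfl fun w hw => ?_
  rw [← card_filter_hammingNorm_eq, filter_filter]
  congr 1
  exact filter_congr fun v _ => and_iff_right_of_imp
    fun hvw => hvw.trans_le (Nat.lt_succ_iff.mp (mem_range.mp hw))

theorem bijOn_hammingNorm_le_of_card_le [AddGroup M] [AddZeroClass A] [Fintype A]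
    (f : (ι → M) →+ A) {t : ℕ} (hker : ∀ v, f v = 0 → hammingNorm v ≤ 2 * t → v = 0)
    (hcard : Fintype.card A ≤
      ∑ w ∈ range (t + 1), (Fintype.card ι).choose w * (Fintype.card M - 1) ^ w) :
    Set.BijOn f {v | hammingNorm v ≤ t} Set.univ := by
  classical
  have hinj := injOn_hammingNorm_le_of_ker f hker
  refine ⟨Set.mapsTo_univ _ _, hinj, ?_⟩
  have hsurj : Set.SurjOn f ({v | hammingNorm v ≤ t} : Finset (ι → M)) (univ : Finset A) := by
    refine surjOn_of_injOn_of_card_le f (fun _ _ => mem_univ _) (by simpa using hinj) ?_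
    rwa [card_univ, card_filter_hammingNorm_le]
  simpa using hsurj

end HammingBall

section Symplectic

variable {n : ℕ}

theorem wt_eq_hammingNorm (v : PauliVec n) : wt v = hammingNorm v :=
  rfl

theorem symp_add_left (u v g : PauliVec n) : symp (u + v) g = symp u g + symp v g := by
  simp only [symp, ← sum_add_distrib, Pi.add_apply, Prod.fst_add, Prod.snd_add]
  exact sum_congr rfl fun _ _ => by ring

theorem symp_single_left (i : Fin n) (a : ZMod 2 × ZMod 2) (g : PauliVec n) :
    symp (Pi.single i a) g = a.1 * (g i).2 + a.2 * (g i).1 := by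
  rw [symp, sum_eq_single i (fun j _ hj => by simp [hj]) (by simp), Pi.single_eq_same]

/-- The symplectic product with a fixed generator `g`, as a homomorphism in the error. -/
def sympHom (g : PauliVec n) : PauliVec n →+ ZMod 2 :=
  AddMonoidHom.mk' (fun v => symp v g) fun u v => symp_add_left u v g

end Symplectic

/-- The syndrome of an error with respect to the generators of the `[[5,1,3]]` code. -/
def syndrome : PauliVec 5 →+ ZMod 2 × ZMod 2 × ZMod 2 × ZMod 2 :=
  (sympHom g1).prod <| (sympHom g2).prod <| (sympHom g3).prod (sympHom g4)

theorem syndrome_apply (v : PauliVec 5) :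
    syndrome v = (symp v g1, symp v g2, symp v g3, symp v g4) :=
  rfl

theorem eq_zero_of_syndrome_single_add_single_eq_zero {i j : Fin 5} (hij : i ≠ j)
    {a b : ZMod 2 × ZMod 2} (h : syndrome (Pi.single i a + Pi.single j b) = 0) :
    a = 0 ∧ b = 0 := by
  simp only [map_add, syndrome_apply, symp_single_left] at h
  decide +revert

theorem eq_zero_of_syndrome_eq_zero_of_wt_le_two {v : PauliVec 5} (hv : syndrome v = 0)
    (hwt : wt v ≤ 2) : v = 0 := by
  obtain ⟨i, j, hij, hsum⟩ := exists_eq_single_add_single_of_hammingNorm_le_two hwt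
  rw [hsum] at hv
  obtain ⟨hi, hj⟩ := eq_zero_of_syndrome_single_add_single_eq_zero hij hv
  rw [hsum, hi, hj, Pi.single_zero, Pi.single_zero, add_zero]

/-- The `[[5,1,3]]` code is perfect: the syndrome map, restricted to the 16 vectors of
weight at most `1`, is a bijection onto `(F₂)⁴`. -/
theorem stmt_14 :
    Set.BijOn (fun v : PauliVec 5 => (symp v g1, symp v g2, symp v g3, symp v g4))
      {v : PauliVec 5 | wt v ≤ 1} Set.univ := by
  have hcard : Fintype.card (ZMod 2 × ZMod 2 × ZMod 2 × ZMod 2) ≤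
      ∑ w ∈ range (1 + 1),
        (Fintype.card (Fin 5)).choose w * (Fintype.card (ZMod 2 × ZMod 2) - 1) ^ w := by
    decide
  simp only [wt_eq_hammingNorm, ← syndrome_apply]
  exact bijOn_hammingNorm_le_of_card_le syndrome
    (fun _ => eq_zero_of_syndrome_eq_zero_of_wt_le_two) hcard
end
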